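/- Let D be a quotient-closed lattice, whose members are all regular languages, closed under marked concatenation, and let ρ : 2^{A*} → R be a multiplicative rating map. Then for every K₁, K₂ ∈ D and every letter a ∈ A: I_{Bool(D)}[K₁aK₂, ρ] = ↓_R ( I_{Bool(D)}[K₁, ρ] · {ρ({a})} · I_{Bool(D)}[K₂, ρ] ). -/

import Mathlib

open Set

namespace Paper

abbrev Lang (A : Type) := Set (List A)
abbrev LClass (A : Type) := Set (Set (List A))

variable {A R M : Type}

/-- A lattice of languages: contains `∅` and `A*`, closed under finite union
and finite intersection. -/
def LangLattice (𝒞 : LClass A) : Prop :=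
  (∅ : Lang A) ∈ 𝒞 ∧ (Set.univ : Lang A) ∈ 𝒞 ∧
    (∀ K L : Lang A, K ∈ 𝒞 → L ∈ 𝒞 → K ∪ L ∈ 𝒞) ∧
    (∀ K L : Lang A, K ∈ 𝒞 → L ∈ 𝒞 → K ∩ L ∈ 𝒞)

/-- A Boolean algebra of languages: a lattice closed under complement. -/
def LangBoolAlg (𝒞 : LClass A) : Prop :=
  LangLattice 𝒞 ∧ ∀ L : Lang A, L ∈ 𝒞 → Lᶜ ∈ 𝒞

/-- A class is quotient-closed when it is closed under left and right quotients
by words. -/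
def QuotientClosed (𝒞 : LClass A) : Prop :=
  ∀ L ∈ 𝒞, ∀ w : List A,
    {u : List A | w ++ u ∈ L} ∈ 𝒞 ∧ {u : List A | u ++ w ∈ L} ∈ 𝒞

/-- The canonical preorder `≤_𝒞` associated with a class `𝒞`. -/
def cle (𝒞 : LClass A) (w w' : List A) : Prop := ∀ L ∈ 𝒞, w ∈ L → w' ∈ L

/-- The canonical equivalence `∼_𝒞` associated with a class `𝒞`. -/
def ceq (𝒞 : LClass A) (w w' : List A) : Prop := ∀ L ∈ 𝒞, (w ∈ L ↔ w' ∈ L)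

/-- The `∼_𝒞`-class of the word `w`. -/
def cclass (𝒞 : LClass A) (w : List A) : Lang A := {v | ceq 𝒞 w v}

/-- `D` is a `∼_𝒞`-class. -/
def IsCClass (𝒞 : LClass A) (D : Lang A) : Prop := ∃ w : List A, D = cclass 𝒞 w

/-- Multiplication of `∼_𝒞`-classes (the class of the concatenation of
representatives). -/
def cmul (𝒞 : LClass A) (D E : Lang A) : Lang A :=
  {x | ∃ u ∈ D, ∃ v ∈ E, ceq 𝒞 (u ++ v) x}

/-- Language concatenation. -/
def cat (K L : Lang A) : Lang A := {w | ∃ u ∈ K, ∃ v ∈ L, u ++ v = w}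

/-- Marked concatenation `K a L`. -/
def mcat (K : Lang A) (a : A) (L : Lang A) : Lang A :=
  {w | ∃ u ∈ K, ∃ v ∈ L, u ++ a :: v = w}

/-- Boolean closure: the least Boolean algebra containing `𝒞`. -/
def BoolC (𝒞 : LClass A) : LClass A := ⋂₀ {𝒟 : LClass A | LangBoolAlg 𝒟 ∧ 𝒞 ⊆ 𝒟}

/-- Polynomial closure: the least class containing `𝒞` closed under union and
marked concatenation. -/
def PolC (𝒞 : LClass A) : LClass A :=
  ⋂₀ {𝒟 : LClass A | 𝒞 ⊆ 𝒟 ∧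
    (∀ K L : Lang A, K ∈ 𝒟 → L ∈ 𝒟 → K ∪ L ∈ 𝒟) ∧
    (∀ (K L : Lang A) (a : A), K ∈ 𝒟 → L ∈ 𝒟 → mcat K a L ∈ 𝒟)}

/-- A cover of `L`: a finite set of languages whose union includes `L`. -/
def IsCover (Ks : LClass A) (L : Lang A) : Prop := Ks.Finite ∧ L ⊆ ⋃₀ Ks

/-- A `𝒞`-cover of `L`: a cover all of whose members belong to `𝒞`. -/
def IsCCover (𝒞 Ks : LClass A) (L : Lang A) : Prop := IsCover Ks L ∧ Ks ⊆ 𝒞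

/-- `α : A* → M` is a monoid morphism. -/
def IsMonoidMorphism [Monoid M] (α : List A → M) : Prop :=
  α [] = 1 ∧ ∀ u v : List A, α (u ++ v) = α u * α v

/-- `α` recognizes `L`. -/
def Recognizes [Monoid M] (α : List A → M) (L : Lang A) : Prop :=
  ∃ F : Set M, L = α ⁻¹' F

/-- A language is regular when it is recognized by a monoid morphism into a
finite monoid. -/
def RegularLang (L : Lang A) : Prop :=
  ∃ (N : Type) (_ : Monoid N) (_ : Finite N) (α : List A → N),
    IsMonoidMorphism α ∧ Recognizes α L

/-- The canonical order on a rating set: `r ≤ s` iff `r + s = s`. -/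
def rle [Add R] (r s : R) : Prop := r + s = s

/-- A rating map: maps `∅` to `0` and commutes with binary union. -/
def IsRatingMap [AddCommMonoid R] (ρ : Lang A → R) : Prop :=
  ρ ∅ = 0 ∧ ∀ K L : Lang A, ρ (K ∪ L) = ρ K + ρ L

/-- A nice rating map: the value of any language is a finite sum of values of
its words. -/
def IsNice [AddCommMonoid R] (ρ : Lang A → R) : Prop :=
  ∀ K : Lang A, ∃ l : List (List A), (∀ w ∈ l, w ∈ K) ∧
    ρ K = (l.map fun w => ρ {w}).sum

/-- A multiplicative rating map: also a morphism for concatenation. -/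
def IsMultiplicative [Semiring R] (ρ : Lang A → R) : Prop :=
  ρ ({[]} : Lang A) = 1 ∧ ∀ K L : Lang A, ρ (cat K L) = ρ K * ρ L

/-- An endomorphism of the additive monoid `(R, +)`. -/
def IsAddEndo [AddCommMonoid R] (γ : R → R) : Prop :=
  γ 0 = 0 ∧ ∀ r s : R, γ (r + s) = γ r + γ s

/-- A quasi-multiplicative rating map for the endomorphism `γ`. -/
def IsQuasiMult [Semiring R] (ρ : Lang A → R) (γ : R → R) : Prop :=
  IsAddEndo γ ∧ (∀ q r s : R, γ (q * γ r * s) = γ (q * r * s)) ∧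
    ∀ K L : Lang A, ρ (cat K L) = γ (ρ K * ρ L)

/-- The `ρ`-imprint of a set of languages. -/
def imprint [Add R] (ρ : Lang A → R) (Ks : LClass A) : Set R :=
  {r | ∃ K ∈ Ks, rle r (ρ K)}

/-- The `𝒟`-optimal `ρ`-imprint on `L` (the imprint of any optimal `𝒟`-cover
of `L`, i.e. the intersection of the imprints of all `𝒟`-covers of `L`). -/
def optImprint [Add R] (𝒟 : LClass A) (ρ : Lang A → R) (L : Lang A) : Set R :=
  {r | ∀ Ks : LClass A, IsCCover 𝒟 Ks L → r ∈ imprint ρ Ks}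

/-- Downset operation on subsets of a rating set. -/
def dclos [Add R] (U : Set R) : Set R := {r | ∃ s ∈ U, rle r s}

/-- Pointwise multiplication of subsets of a rating set. -/
def smul [Mul R] (U V : Set R) : Set R := {x | ∃ u ∈ U, ∃ v ∈ V, u * v = x}

theorem boolC_sub {𝒟 : LClass A} : 𝒟 ⊆ BoolC 𝒟 := fun _ hL _ h => h.2 hL

theorem boolC_alg (𝒟 : LClass A) : LangBoolAlg (BoolC 𝒟) := by
  refine ⟨⟨?_, ?_, ?_, ?_⟩, ?_⟩
  · intro E h; exact h.1.1.1
  · intro E h; exact h.1.1.2.1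
  · intro K L hK hL E h; exact h.1.1.2.2.1 _ _ (hK E h) (hL E h)
  · intro K L hK hL E h; exact h.1.1.2.2.2 _ _ (hK E h) (hL E h)
  · intro L hL E h; exact h.1.2 _ (hL E h)

theorem lat_sInter {𝒞 : LClass A} (h : LangLattice 𝒞) {F : LClass A} (hF : F.Finite)
    (hs : F ⊆ 𝒞) : ⋂₀ F ∈ 𝒞 := by
  induction F, hF using Set.Finite.induction_on with
  | empty => simpa using h.2.1
  | insert _ _ ih =>
    rw [Set.sInter_insert]
    exact h.2.2.2 _ _ (hs (Set.mem_insert _ _)) (ih (fun x hx => hs (Set.mem_insert_of_mem _ hx)))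

theorem lat_sUnion {𝒞 : LClass A} (h : LangLattice 𝒞) {F : LClass A} (hF : F.Finite)
    (hs : F ⊆ 𝒞) : ⋃₀ F ∈ 𝒞 := by
  induction F, hF using Set.Finite.induction_on with
  | empty => simpa using h.1
  | insert _ _ ih =>
    rw [Set.sUnion_insert]
    exact h.2.2.1 _ _ (hs (Set.mem_insert _ _)) (ih (fun x hx => hs (Set.mem_insert_of_mem _ hx)))

/-- The type of a word relative to a set of languages. -/
def typ (F : LClass A) (u : List A) : LClass A := {L | L ∈ F ∧ u ∈ L}

/-- Words having the same type as `u`. -/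
def cls (F : LClass A) (u : List A) : Lang A := {x | typ F x = typ F u}

theorem mem_cls {F : LClass A} {u x : List A} (h : x ∈ cls F u) {L : Lang A} (hL : L ∈ F) :
    x ∈ L ↔ u ∈ L := by
  have := Set.ext_iff.1 h L
  simpa [typ, hL] using this

theorem cls_mem {𝒞 : LClass A} (h : LangBoolAlg 𝒞) {F : LClass A} (hF : F.Finite)
    (hs : F ⊆ 𝒞) (u : List A) : cls F u ∈ 𝒞 := by
  classical
  have e : cls F u = ⋂₀ ((fun L : Lang A => if u ∈ L then L else Lᶜ) '' F) := by
    ext x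
    simp only [cls, typ, Set.mem_setOf_eq, Set.sInter_image, Set.mem_iInter, Set.ext_iff]
    constructor
    · intro hx L hL
      have := hx L
      by_cases hu : u ∈ L <;> simp_all
    · intro hx L
      by_cases hL : L ∈ F
      · have := hx L hL
        by_cases hu : u ∈ L <;> simp_all
      · simp [hL]
  rw [e]
  apply lat_sInter h.1 (hF.image _)
  rintro _ ⟨L, hL, rfl⟩
  dsimp only
  split_ifs
  · exact hs hL
  · exact h.2 _ (hs hL)

theorem typ_finite {F : LClass A} (hF : F.Finite) : (Set.range (typ F)).Finite :=
  hF.finite_subsets.subset (by rintro _ ⟨u, rfl⟩ L hL; exact hL.1)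

theorem cls_finite {F : LClass A} (hF : F.Finite) : (Set.range (cls F)).Finite := by
  refine ((typ_finite hF).image (fun t => {x | typ F x = t})).subset ?_
  rintro _ ⟨u, rfl⟩
  exact ⟨_, ⟨u, rfl⟩, rfl⟩

theorem boolC_type {𝒟 : LClass A} {L : Lang A} (hL : L ∈ BoolC 𝒟) :
    ∃ F : LClass A, F.Finite ∧ F ⊆ 𝒟 ∧
      ∀ u v, (∀ X ∈ F, u ∈ X ↔ v ∈ X) → (u ∈ L ↔ v ∈ L) := by
  refine hL {L | ∃ F : LClass A, F.Finite ∧ F ⊆ 𝒟 ∧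
      ∀ u v, (∀ X ∈ F, u ∈ X ↔ v ∈ X) → (u ∈ L ↔ v ∈ L)} ⟨⟨⟨?_, ?_, ?_, ?_⟩, ?_⟩, ?_⟩
  · exact ⟨∅, Set.finite_empty, by simp, by simp⟩
  · exact ⟨∅, Set.finite_empty, by simp, by simp⟩
  · rintro K L ⟨F, f1, f2, f3⟩ ⟨G, g1, g2, g3⟩
    refine ⟨F ∪ G, f1.union g1, Set.union_subset f2 g2, fun u v h => ?_⟩
    have a := f3 u v fun X hX => h X (Or.inl hX)
    have b := g3 u v fun X hX => h X (Or.inr hX)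
    simp [a, b]
  · rintro K L ⟨F, f1, f2, f3⟩ ⟨G, g1, g2, g3⟩
    refine ⟨F ∪ G, f1.union g1, Set.union_subset f2 g2, fun u v h => ?_⟩
    have a := f3 u v fun X hX => h X (Or.inl hX)
    have b := g3 u v fun X hX => h X (Or.inr hX)
    simp [a, b]
  · rintro L ⟨F, f1, f2, f3⟩
    refine ⟨F, f1, f2, fun u v h => ?_⟩
    simp [f3 u v h]
  · intro L hL
    exact ⟨{L}, Set.finite_singleton _, by simpa using hL, fun u v h => h L rfl⟩

/-- Generic quotient finiteness for an indexed family of preimage operations. -/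
theorem boolC_pre {𝒟 : LClass A} {ι : Type} (f : ι → List A → List A)
    (h : ∀ L ∈ 𝒟, (Set.range fun i => f i ⁻¹' L).Finite ∧ ∀ i, f i ⁻¹' L ∈ 𝒟)
    {L : Lang A} (hL : L ∈ BoolC 𝒟) :
    (Set.range fun i => f i ⁻¹' L).Finite ∧ ∀ i, f i ⁻¹' L ∈ BoolC 𝒟 := by
  have B := boolC_alg 𝒟
  refine hL {L | (Set.range fun i => f i ⁻¹' L).Finite ∧ ∀ i, f i ⁻¹' L ∈ BoolC 𝒟}
    ⟨⟨⟨?_, ?_, ?_, ?_⟩, ?_⟩, ?_⟩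
  · refine ⟨(Set.finite_singleton ∅).subset ?_, fun i => B.1.1⟩
    rintro _ ⟨i, rfl⟩; simp
  · refine ⟨(Set.finite_singleton Set.univ).subset ?_, fun i => B.1.2.1⟩
    rintro _ ⟨i, rfl⟩; simp
  · rintro K L ⟨k1, k2⟩ ⟨l1, l2⟩
    refine ⟨(Set.Finite.image2 (· ∪ ·) k1 l1).subset ?_, fun i => B.1.2.2.1 _ _ (k2 i) (l2 i)⟩
    rintro _ ⟨i, rfl⟩; exact ⟨_, ⟨i, rfl⟩, _, ⟨i, rfl⟩, rfl⟩
  · rintro K L ⟨k1, k2⟩ ⟨l1, l2⟩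
    refine ⟨(Set.Finite.image2 (· ∩ ·) k1 l1).subset ?_, fun i => B.1.2.2.2 _ _ (k2 i) (l2 i)⟩
    rintro _ ⟨i, rfl⟩; exact ⟨_, ⟨i, rfl⟩, _, ⟨i, rfl⟩, rfl⟩
  · rintro L ⟨l1, l2⟩
    refine ⟨(l1.image (·ᶜ)).subset ?_, fun i => B.2 _ (l2 i)⟩
    rintro _ ⟨i, rfl⟩; exact ⟨_, ⟨i, rfl⟩, rfl⟩
  · intro L hL
    exact ⟨(h L hL).1, fun i => boolC_sub ((h L hL).2 i)⟩

theorem boolC_left {𝒟 : LClass A} (hqc : QuotientClosed 𝒟) (hreg : ∀ L ∈ 𝒟, RegularLang L)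
    {L : Lang A} (hL : L ∈ BoolC 𝒟) :
    (Set.range fun w => (fun u => w ++ u) ⁻¹' L).Finite ∧
      ∀ w, (fun u => w ++ u) ⁻¹' L ∈ BoolC 𝒟 := by
  refine boolC_pre (fun w u => w ++ u) (fun L hL => ⟨?_, fun w => (hqc L hL w).1⟩) hL
  obtain ⟨N, _, _, α, hα, S, rfl⟩ := hreg L hL
  refine (Set.finite_range fun n : N => {u | n * α u ∈ S}).subset ?_
  rintro _ ⟨w, rfl⟩
  exact ⟨α w, by ext u; simp [hα.2]⟩

theorem boolC_right {𝒟 : LClass A} (hqc : QuotientClosed 𝒟) (hreg : ∀ L ∈ 𝒟, RegularLang L)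
    {L : Lang A} (hL : L ∈ BoolC 𝒟) :
    (Set.range fun w => (fun u => u ++ w) ⁻¹' L).Finite ∧
      ∀ w, (fun u => u ++ w) ⁻¹' L ∈ BoolC 𝒟 := by
  refine boolC_pre (fun w u => u ++ w) (fun L hL => ⟨?_, fun w => (hqc L hL w).2⟩) hL
  obtain ⟨N, _, _, α, hα, S, rfl⟩ := hreg L hL
  refine (Set.finite_range fun n : N => {u | α u * n ∈ S}).subset ?_
  rintro _ ⟨w, rfl⟩
  exact ⟨α w, by ext u; simp [hα.2]⟩

theorem rle_trans [AddCommMonoid R] {r s t : R} (h : rle r s) (h' : rle s t) : rle r t := by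
  unfold rle at *
  rw [← h', ← add_assoc, h]

theorem rle_mul [Semiring R] (hidem : ∀ r : R, r + r = r) {r s r' s' : R}
    (h : rle r s) (h' : rle r' s') : rle (r * r') (s * s') := by
  refine rle_trans (s := s * r') ?_ ?_
  · unfold rle at *; rw [← add_mul, h]
  · unfold rle at *; rw [← mul_add, h']

theorem rho_mono [AddCommMonoid R] {ρ : Lang A → R} (hρ : IsRatingMap ρ) {K L : Lang A}
    (h : K ⊆ L) : rle (ρ K) (ρ L) := by
  unfold rle
  rw [← hρ.2, Set.union_eq_self_of_subset_left h]

theorem rho_mcat [Semiring R] {ρ : Lang A → R} (hm : IsMultiplicative ρ) (K L : Lang A) (a : A) :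
    ρ (mcat K a L) = ρ K * ρ {[a]} * ρ L := by
  rw [← hm.2, ← hm.2]
  congr 1
  ext w
  simp [mcat, cat]

theorem opt_type [AddCommMonoid R] [Finite R] (hidem : ∀ r : R, r + r = r) (𝒟 : LClass A)
    (ρ : Lang A → R) (hρ : IsRatingMap ρ) (K : Lang A) :
    ∃ F : LClass A, F.Finite ∧ F ⊆ 𝒟 ∧ ∀ G, F ⊆ G → ∀ u ∈ K,
      ρ (cls G u) ∈ optImprint (BoolC 𝒟) ρ K := by
  have key : ∀ r : R, ∃ F : LClass A, F.Finite ∧ F ⊆ 𝒟 ∧ (r ∉ optImprint (BoolC 𝒟) ρ K →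
      ∀ G, F ⊆ G → ∀ u ∈ K, ρ (cls G u) ≠ r) := by
    intro r
    by_cases hr : r ∈ optImprint (BoolC 𝒟) ρ K
    · exact ⟨∅, Set.finite_empty, by simp, fun h => absurd hr h⟩
    simp only [optImprint, Set.mem_setOf_eq, not_forall] at hr
    obtain ⟨Ks, ⟨⟨hfin, hcov⟩, hsub⟩, hni⟩ := hr
    have : ∀ L : Lang A, ∃ F : LClass A, L ∈ Ks → F.Finite ∧ F ⊆ 𝒟 ∧
      ∀ u v, (∀ X ∈ F, u ∈ X ↔ v ∈ X) → (u ∈ L ↔ v ∈ L) := by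
      intro L
      by_cases hL : L ∈ Ks
      · obtain ⟨F, hF⟩ := boolC_type (hsub hL)
        exact ⟨F, fun _ => hF⟩
      · exact ⟨∅, fun h => absurd h hL⟩
    choose f hf using this
    refine ⟨⋃ L ∈ Ks, f L, hfin.biUnion fun L hL => (hf L hL).1,
      Set.iUnion₂_subset fun L hL => (hf L hL).2.1, fun _ G hG u hu he => hni ?_⟩
    obtain ⟨L, hL, huL⟩ := hcov hu
    refine ⟨L, hL, he ▸ rho_mono hρ fun x hx => ?_⟩
    refine ((hf L hL).2.2 x u fun X hX => mem_cls hx (hG ?_)).2 huL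
    exact Set.mem_biUnion hL hX
  choose f h1 h2 h3 using key
  refine ⟨⋃ r, f r, Set.finite_iUnion h1, Set.iUnion_subset h2, fun G hG u hu => ?_⟩
  by_contra hc
  exact h3 _ hc G ((Set.subset_iUnion f _).trans hG) u hu rfl

theorem mcat_up {𝒟 : LClass A} (hlat : LangLattice 𝒟)
    (hmcat : ∀ (K L : Lang A) (a : A), K ∈ 𝒟 → L ∈ 𝒟 → mcat K a L ∈ 𝒟)
    {F : LClass A} (hF : F.Finite) (hs : F ⊆ 𝒟) (a : A) {s t : LClass A} (h1 : s ⊆ F)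
    (h2 : t ⊆ F) : mcat (⋂₀ s) a (⋂₀ t) ∈ 𝒟 :=
  hmcat _ _ _ (lat_sInter hlat (hF.subset h1) (h1.trans hs))
    (lat_sInter hlat (hF.subset h2) (h2.trans hs))

/-- The covering languages. -/
def W (F : LClass A) (a : A) (p : LClass A × LClass A) : Lang A :=
  mcat (⋂₀ p.1) a (⋂₀ p.2) \
    ⋃₀ ((fun q : LClass A × LClass A => mcat (⋂₀ q.1) a (⋂₀ q.2)) ''
      {q | (q.1 ⊆ F ∧ q.2 ⊆ F) ∧ p < q})

theorem W_mem {𝒟 : LClass A} (hlat : LangLattice 𝒟)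
    (hmcat : ∀ (K L : Lang A) (a : A), K ∈ 𝒟 → L ∈ 𝒟 → mcat K a L ∈ 𝒟)
    {F : LClass A} (hF : F.Finite) (hs : F ⊆ 𝒟) (a : A) {p : LClass A × LClass A}
    (h1 : p.1 ⊆ F) (h2 : p.2 ⊆ F) : W F a p ∈ BoolC 𝒟 := by
  have B := boolC_alg 𝒟
  refine B.1.2.2.2 _ _ (boolC_sub (mcat_up hlat hmcat hF hs a h1 h2)) (B.2 _ (boolC_sub ?_))
  apply lat_sUnion hlat
  · apply Set.Finite.image
    exact (hF.finite_subsets.prod hF.finite_subsets).subset fun q hq => hq.1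
  · rintro _ ⟨q, hq, rfl⟩
    exact mcat_up hlat hmcat hF hs a hq.1.1 hq.1.2

theorem typ_sub (F : LClass A) (u : List A) : typ F u ⊆ F := fun _ h => h.1

theorem mem_sInter_typ {F : LClass A} {s : LClass A} (hs : s ⊆ F) {x : List A} :
    x ∈ ⋂₀ s ↔ s ⊆ typ F x :=
  ⟨fun h L hL => ⟨hs hL, h L hL⟩, fun h L hL => (h hL).2⟩

theorem W_sub (F : LClass A) (a : A) (u v : List A) :
    W F a (typ F u, typ F v) ⊆ mcat (cls F u) a (cls F v) := by
  rintro w ⟨⟨x, hx, y, hy, rfl⟩, hn⟩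
  dsimp only at hx hy
  rw [mem_sInter_typ (typ_sub F u)] at hx
  rw [mem_sInter_typ (typ_sub F v)] at hy
  have hle : (typ F u, typ F v) ≤ (typ F x, typ F y) := ⟨hx, hy⟩
  rcases hle.eq_or_lt with h | h
  · rw [Prod.mk.injEq] at h
    exact ⟨x, h.1.symm, y, h.2.symm, rfl⟩
  · refine absurd ⟨_, ⟨(typ F x, typ F y), ⟨⟨typ_sub F x, typ_sub F y⟩, h⟩, rfl⟩, ?_⟩ hn
    exact ⟨x, (mem_sInter_typ (typ_sub F x)).2 subset_rfl, y,
      (mem_sInter_typ (typ_sub F y)).2 subset_rfl, rfl⟩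

theorem W_cover {F : LClass A} (hF : F.Finite) (a : A) {K₁ K₂ : Lang A} (h1 : K₁ ∈ F)
    (h2 : K₂ ∈ F) {w : List A} (hw : w ∈ mcat K₁ a K₂) :
    ∃ u ∈ K₁, ∃ v ∈ K₂, w ∈ W F a (typ F u, typ F v) := by
  obtain ⟨u, hu, v, hv, huv⟩ := hw
  let S : Set (LClass A × LClass A) :=
    {p | ∃ x ∈ K₁, ∃ y ∈ K₂, x ++ a :: y = w ∧ p = (typ F x, typ F y)}
  have hS : S.Finite := by
    refine ((typ_finite hF).prod (typ_finite hF)).subset ?_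
    rintro _ ⟨x, _, y, _, _, rfl⟩
    exact ⟨⟨x, rfl⟩, ⟨y, rfl⟩⟩
  obtain ⟨p, ⟨⟨x, hx, y, hy, hxy, rfl⟩, hmax⟩⟩ := hS.exists_maximal ⟨_, u, hu, v, hv, huv, rfl⟩
  refine ⟨x, hx, y, hy, ⟨x, (mem_sInter_typ (typ_sub F x)).2 subset_rfl, y,
    (mem_sInter_typ (typ_sub F y)).2 subset_rfl, hxy⟩, ?_⟩
  rintro ⟨_, ⟨q, ⟨⟨q1, q2⟩, hlt⟩, rfl⟩, x', hx', y', hy', hw'⟩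
  rw [mem_sInter_typ q1] at hx'
  rw [mem_sInter_typ q2] at hy'
  have hq : q ≤ (typ F x', typ F y') := ⟨hx', hy'⟩
  have hlt' := hlt.trans_le hq
  have k1 : x' ∈ K₁ := (hlt'.le.1 (show K₁ ∈ typ F x from ⟨h1, hx⟩)).2
  have k2 : y' ∈ K₂ := (hlt'.le.2 (show K₂ ∈ typ F y from ⟨h2, hy⟩)).2
  exact hlt'.not_ge (hmax ⟨x', k1, y', k2, hw', rfl⟩ hlt'.le)

/-- Optimal `Bool(𝒟)`-imprints of marked concatenations. -/
theorem statement15 {A R : Type} [Fintype A] [Semiring R] [Finite R]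
    (hidem : ∀ r : R, r + r = r)
    (𝒟 : LClass A) (hlat : LangLattice 𝒟) (hqc : QuotientClosed 𝒟)
    (hreg : ∀ L ∈ 𝒟, RegularLang L)
    (hmcat : ∀ (K L : Lang A) (a : A), K ∈ 𝒟 → L ∈ 𝒟 → mcat K a L ∈ 𝒟)
    (ρ : Lang A → R) (hρ : IsRatingMap ρ) (hmult : IsMultiplicative ρ)
    (K₁ K₂ : Lang A) (hK₁ : K₁ ∈ 𝒟) (hK₂ : K₂ ∈ 𝒟) (a : A) :
    optImprint (BoolC 𝒟) ρ (mcat K₁ a K₂) =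
      dclos (smul (smul (optImprint (BoolC 𝒟) ρ K₁) {ρ ({[a]} : Lang A)})
        (optImprint (BoolC 𝒟) ρ K₂)) := by
  have B := boolC_alg 𝒟
  apply Set.Subset.antisymm
  · intro r hr
    obtain ⟨F₁, f1, f2, f3⟩ := opt_type hidem 𝒟 ρ hρ K₁
    obtain ⟨F₂, g1, g2, g3⟩ := opt_type hidem 𝒟 ρ hρ K₂
    let F : LClass A := (F₁ ∪ F₂) ∪ {K₁, K₂}
    have hF : F.Finite := (f1.union g1).union (by simp)
    have hs : F ⊆ 𝒟 := by
      refine Set.union_subset (Set.union_subset f2 g2) ?_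
      rintro _ (rfl | rfl) <;> assumption
    have hF1 : F₁ ⊆ F := fun x hx => Or.inl (Or.inl hx)
    have hF2 : F₂ ⊆ F := fun x hx => Or.inl (Or.inr hx)
    have m1 : K₁ ∈ F := Or.inr (Or.inl rfl)
    have m2 : K₂ ∈ F := Or.inr (Or.inr rfl)
    obtain ⟨_, ⟨u, hu, v, hv, rfl⟩, hle⟩ :=
      hr {X | ∃ u ∈ K₁, ∃ v ∈ K₂, W F a (typ F u, typ F v) = X} (by
        refine ⟨⟨?_, ?_⟩, ?_⟩
        · refine (((typ_finite hF).prod (typ_finite hF)).image (W F a)).subset ?_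
          rintro _ ⟨u, _, v, _, rfl⟩
          exact ⟨_, ⟨⟨u, rfl⟩, ⟨v, rfl⟩⟩, rfl⟩
        · intro w hw
          obtain ⟨u, hu, v, hv, h⟩ := W_cover hF a m1 m2 hw
          exact ⟨_, ⟨u, hu, v, hv, rfl⟩, h⟩
        · rintro _ ⟨u, _, v, _, rfl⟩
          exact W_mem hlat hmcat hF hs a (typ_sub F u) (typ_sub F v))
    refine ⟨_, ⟨_, ⟨_, f3 F hF1 u hu, _, rfl, rfl⟩, _, g3 F hF2 v hv, rfl⟩, ?_⟩
    rw [← rho_mcat hmult]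
    exact rle_trans hle (rho_mono hρ (W_sub F a u v))
  · rintro r ⟨_, ⟨_, ⟨r₁, h1, _, rfl, rfl⟩, r₂, h2, rfl⟩, hle⟩ Ks ⟨⟨hfin, hcov⟩, hsub⟩
    let F : LClass A := ⋃ K ∈ Ks, Set.range fun w => (fun u => w ++ u) ⁻¹' K
    have hF : F.Finite := hfin.biUnion fun K hK => (boolC_left hqc hreg (hsub hK)).1
    have hs : F ⊆ BoolC 𝒟 := by
      refine Set.iUnion₂_subset fun K hK => ?_
      rintro _ ⟨w, rfl⟩
      exact (boolC_left hqc hreg (hsub hK)).2 w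
    obtain ⟨_, ⟨v, hv, rfl⟩, hle2⟩ := h2 (cls F '' K₂) (by
      refine ⟨⟨(cls_finite hF).subset (Set.image_subset_range _ _), fun v hv => ?_⟩, ?_⟩
      · exact ⟨_, ⟨v, hv, rfl⟩, rfl⟩
      · rintro _ ⟨v, _, rfl⟩
        exact cls_mem B hF hs v)
    let Q : Lang A → Lang A := fun K =>
      ⋂₀ ((fun x => (fun u => u ++ a :: x) ⁻¹' K) '' cls F v)
    obtain ⟨_, ⟨K, hK, rfl⟩, hle1⟩ := h1 (Q '' Ks) (by
      refine ⟨⟨hfin.image _, fun u hu => ?_⟩, ?_⟩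
      · obtain ⟨K, hK, hw⟩ := hcov (show u ++ a :: v ∈ mcat K₁ a K₂ from ⟨u, hu, v, hv, rfl⟩)
        refine ⟨_, ⟨K, hK, rfl⟩, ?_⟩
        rintro _ ⟨x, hx, rfl⟩
        have hm : (fun y => (u ++ [a]) ++ y) ⁻¹' K ∈ F := Set.mem_biUnion hK ⟨u ++ [a], rfl⟩
        have := (mem_cls hx hm).2 (by simpa using hw)
        simpa using this
      · rintro _ ⟨K, hK, rfl⟩
        apply lat_sInter B.1
        · refine (boolC_right hqc hreg (hsub hK)).1.subset ?_
          rintro _ ⟨x, _, rfl⟩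
          exact ⟨a :: x, rfl⟩
        · rintro _ ⟨x, _, rfl⟩
          exact (boolC_right hqc hreg (hsub hK)).2 (a :: x))
    refine ⟨K, hK, rle_trans hle (rle_trans (rle_mul hidem (rle_mul hidem hle1 (hidem _)) hle2) ?_)⟩
    rw [← rho_mcat hmult]
    apply rho_mono hρ
    rintro _ ⟨u, hu, x, hx, rfl⟩
    exact hu _ ⟨x, hx, rfl⟩

end Paper
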